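/- Let 1 < p < ∞ and let q satisfy 1/p + 1/q = 1. Let θ : [0,1] × [0,1] → ℝ be measurable with ‖θ‖_{Y^q} < ∞ and antisymmetric, i.e., θ(u,v) = −θ(v,u) for almost all (u,v). Define ‖θ‖^G := sup over x, y ∈ L^p[0,1] with ‖x,y‖_p^G ≠ 0 of |∫₀¹∫₀¹ x(u) y(v) θ(u,v) du dv| / ‖x,y‖_p^G, and ‖θ‖^H := sup over x, y ∈ L^p[0,1] with ‖x,y‖_p^H ≠ 0 of |∫₀¹∫₀¹ x(u) y(v) θ(u,v) du dv| / ‖x,y‖_p^H. Then 2^{1/p − 1} ‖θ‖^G ≤ ‖θ‖^H ≤ 2^{1/p} ‖θ‖^G. -/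

import Mathlib

/-!
The two 2-norms are compared pair by pair, and the comparison of the dual norms follows by passing
to quotients. Write `x₁ ∧ x₂` for the kernel `x₁(u) x₂(v) - x₁(v) x₂(u)` and `‖x₁ ∧ x₂‖_p` for its
`L^p` norm on the unit square, so that `‖x₁ ∧ x₂‖_p = 2^(1/p) ‖x₁,x₂‖^H`.

* `gahler_le`: the Gähler determinant is the pairing of `x₁ ∧ x₂` with `y₁ ⊗ y₂`, so by Hölder
  `‖x₁,x₂‖^G ≤ ‖x₁ ∧ x₂‖_p`.
* `le_gahler`: `‖x₁ ∧ x₂‖_p ≤ 2 ‖x₁,x₂‖^G`. Both sides scale by `s` when `x₂` is replaced by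
  `z = s x₂ - t x₁`, and `s > 0` and `t` can be chosen so that the dual function
  `sign(z) |z|^(p-1)` annihilates `x₁` (`exists_birkhoff`). For such `z` the normalised dual
  functions of `x₁` and `z` give `‖x₁,z‖^G ≥ ‖x₁‖ ‖z‖`, and the triangle inequality gives
  `‖x₁ ∧ z‖_p ≤ 2 ‖x₁‖ ‖z‖`.

Consequently the two 2-norms vanish for the same pairs, and the sets of quotients defining `‖θ‖^G`
and `‖θ‖^H` dominate each other elementwise up to the constants `2^(1 - 1/p)` and `2^(1/p)`.
-/

open MeasureTheory

/-- The `L^p` norm on `[0,1]`: `‖x‖_p = (∫₀¹ |x(t)|^p dt)^(1/p)`. -/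
noncomputable def pnorm (p : ℝ) (x : ℝ → ℝ) : ℝ :=
  (∫ t in (0:ℝ)..1, |x t| ^ p) ^ (1 / p)

/-- `x ∈ L^p[0,1]`: `x` is measurable and `∫₀¹ |x(t)|^p dt < ∞`. -/
def MemLp01 (p : ℝ) (x : ℝ → ℝ) : Prop :=
  Measurable x ∧ IntervalIntegrable (fun t => |x t| ^ p) volume 0 1

/-- The set of values `|det (∫₀¹ xᵢ(u) yⱼ(u) du)ⱼᵢ|` over `y₁, y₂ ∈ L^q[0,1]` with
`‖y₁‖_q ≤ 1`, `‖y₂‖_q ≤ 1`; its supremum is the Gähler 2-norm `‖x₁,x₂‖_p^G`. -/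
noncomputable def GahlerSet (q : ℝ) (x₁ x₂ : ℝ → ℝ) : Set ℝ :=
  { r | ∃ y₁ y₂ : ℝ → ℝ, MemLp01 q y₁ ∧ MemLp01 q y₂ ∧
      pnorm q y₁ ≤ 1 ∧ pnorm q y₂ ≤ 1 ∧
      r = |(∫ u in (0:ℝ)..1, x₁ u * y₁ u) * (∫ u in (0:ℝ)..1, x₂ u * y₂ u) -
           (∫ u in (0:ℝ)..1, x₂ u * y₁ u) * (∫ u in (0:ℝ)..1, x₁ u * y₂ u)| }

/-- The Gähler 2-norm `‖x₁,x₂‖_p^G` on `L^p[0,1]` (where `1/p + 1/q = 1`). -/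
noncomputable def gahler (q : ℝ) (x₁ x₂ : ℝ → ℝ) : ℝ := sSup (GahlerSet q x₁ x₂)

/-- The Gunawan 2-norm
`‖x₁,x₂‖_p^H = ((1/2) ∫₀¹∫₀¹ |x₁(u)x₂(v) − x₁(v)x₂(u)|^p du dv)^(1/p)`. -/
noncomputable def gunawan (p : ℝ) (x₁ x₂ : ℝ → ℝ) : ℝ :=
  ((1 / 2) * ∫ v in (0:ℝ)..1, ∫ u in (0:ℝ)..1,
    |x₁ u * x₂ v - x₁ v * x₂ u| ^ p) ^ (1 / p)

/-- The set of values `(∫₀¹ |∫₀¹ x(u) θ(u,v) du|^q dv)^(1/q)` over `x ∈ L^p[0,1]`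
with `‖x‖_p = 1`; its supremum is `‖θ‖_{Y^q}`. -/
noncomputable def Yset (p q : ℝ) (θ : ℝ → ℝ → ℝ) : Set ℝ :=
  { r | ∃ x : ℝ → ℝ, MemLp01 p x ∧ pnorm p x = 1 ∧
      r = (∫ v in (0:ℝ)..1, |∫ u in (0:ℝ)..1, x u * θ u v| ^ q) ^ (1 / q) }

/-- The set of ratios `|∫₀¹∫₀¹ x(u) y(v) θ(u,v) du dv| / ‖x,y‖_p^G` over
`x, y ∈ L^p[0,1]` with `‖x,y‖_p^G ≠ 0`; its supremum is `‖θ‖^G`. -/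
noncomputable def GdualSet (p q : ℝ) (θ : ℝ → ℝ → ℝ) : Set ℝ :=
  { r | ∃ x y : ℝ → ℝ, MemLp01 p x ∧ MemLp01 p y ∧ gahler q x y ≠ 0 ∧
      r = |∫ v in (0:ℝ)..1, ∫ u in (0:ℝ)..1, x u * y v * θ u v| / gahler q x y }

/-- The set of ratios `|∫₀¹∫₀¹ x(u) y(v) θ(u,v) du dv| / ‖x,y‖_p^H` over
`x, y ∈ L^p[0,1]` with `‖x,y‖_p^H ≠ 0`; its supremum is `‖θ‖^H`. -/
noncomputable def HdualSet (p : ℝ) (θ : ℝ → ℝ → ℝ) : Set ℝ :=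
  { r | ∃ x y : ℝ → ℝ, MemLp01 p x ∧ MemLp01 p y ∧ gunawan p x y ≠ 0 ∧
      r = |∫ v in (0:ℝ)..1, ∫ u in (0:ℝ)..1, x u * y v * θ u v| / gunawan p x y }

/-! ### `L^p` functions on the unit interval and their tensor products -/

/-- Lebesgue measure on the unit interval, in the form underlying `∫ t in (0:ℝ)..1`. -/
noncomputable abbrev unitMeas : Measure ℝ := volume.restrict (Set.Ioc (0:ℝ) 1)

lemma intervalIntegral_eq_unitMeas (f : ℝ → ℝ) :
    ∫ t in (0:ℝ)..1, f t = ∫ t, f t ∂unitMeas :=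
  intervalIntegral.integral_of_le zero_le_one

lemma memLp01_iff {p : ℝ} (hp : 0 < p) (x : ℝ → ℝ) :
    MemLp01 p x ↔ Measurable x ∧ MemLp x (ENNReal.ofReal p) unitMeas := by
  unfold MemLp01
  refine and_congr_right fun hx => ?_
  rw [intervalIntegrable_iff_integrableOn_Ioc_of_le zero_le_one,
    ← integrable_norm_rpow_iff hx.aestronglyMeasurable (by simpa using hp) ENNReal.ofReal_ne_top,
    ENNReal.toReal_ofReal hp.le]
  rfl

lemma MemLp01.integrable {p : ℝ} {x : ℝ → ℝ} (hx : MemLp01 p x) :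
    Integrable (fun t => |x t| ^ p) unitMeas :=
  (intervalIntegrable_iff_integrableOn_Ioc_of_le zero_le_one).1 hx.2

lemma memLp_tensor {p : ℝ} (hp : 0 < p) {x y : ℝ → ℝ} (hx : MemLp01 p x) (hy : MemLp01 p y) :
    MemLp (fun z : ℝ × ℝ => x z.1 * y z.2) (ENNReal.ofReal p) (unitMeas.prod unitMeas) := by
  have hm : Measurable (fun z : ℝ × ℝ => x z.1 * y z.2) :=
    (hx.1.comp measurable_fst).mul (hy.1.comp measurable_snd)
  rw [← integrable_norm_rpow_iff hm.aestronglyMeasurable (by simpa using hp) ENNReal.ofReal_ne_top,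
    ENNReal.toReal_ofReal hp.le]
  refine (hx.integrable.mul_prod hy.integrable).congr (ae_of_all _ fun z => ?_)
  simp only [Real.norm_eq_abs, abs_mul]
  rw [Real.mul_rpow (abs_nonneg _) (abs_nonneg _)]

lemma integral_tensor (p : ℝ) (x y : ℝ → ℝ) :
    ∫ z : ℝ × ℝ, |x z.1 * y z.2| ^ p ∂(unitMeas.prod unitMeas) =
      (∫ t, |x t| ^ p ∂unitMeas) * ∫ t, |y t| ^ p ∂unitMeas := by
  rw [← integral_prod_mul (fun t => |x t| ^ p) (fun t => |y t| ^ p)]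
  refine integral_congr_ae (ae_of_all _ fun z => ?_)
  simp only [abs_mul]
  rw [Real.mul_rpow (abs_nonneg _) (abs_nonneg _)]

/-! ### The wedge kernel and the Gunawan 2-norm -/

/-- The wedge `x ∧ y`, as the antisymmetric kernel `(u, v) ↦ x(u) y(v) - x(v) y(u)`. -/
def wedge (x y : ℝ → ℝ) (z : ℝ × ℝ) : ℝ := x z.1 * y z.2 - x z.2 * y z.1

/-- The `p`-th power of the `L^p` norm of `x ∧ y` on the unit square. -/
noncomputable def wedgeInt (p : ℝ) (x y : ℝ → ℝ) : ℝ :=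
  ∫ z, |wedge x y z| ^ p ∂(unitMeas.prod unitMeas)

lemma wedgeInt_nonneg (p : ℝ) (x y : ℝ → ℝ) : 0 ≤ wedgeInt p x y :=
  integral_nonneg fun _ => by positivity

lemma memLp_wedge {p : ℝ} (hp : 0 < p) {x y : ℝ → ℝ} (hx : MemLp01 p x) (hy : MemLp01 p y) :
    MemLp (wedge x y) (ENNReal.ofReal p) (unitMeas.prod unitMeas) := by
  refine ((memLp_tensor hp hx hy).sub (memLp_tensor hp hy hx)).congr_norm ?_ ?_
  · exact (((hx.1.comp measurable_fst).mul (hy.1.comp measurable_snd)).sub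
      ((hx.1.comp measurable_snd).mul (hy.1.comp measurable_fst))).aestronglyMeasurable
  · refine ae_of_all _ fun z => ?_
    simp only [wedge, Pi.sub_apply]
    rw [mul_comm (y z.1)]

lemma integrable_wedge {p : ℝ} (hp : 0 < p) {x y : ℝ → ℝ} (hx : MemLp01 p x) (hy : MemLp01 p y) :
    Integrable (fun z => |wedge x y z| ^ p) (unitMeas.prod unitMeas) := by
  have h := memLp_wedge hp hx hy
  have h' := (integrable_norm_rpow_iff h.1 (by simpa using hp) ENNReal.ofReal_ne_top).2 h
  rwa [ENNReal.toReal_ofReal hp.le] at h'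

lemma gunawan_eq {p : ℝ} (hp : 0 < p) {x y : ℝ → ℝ} (hx : MemLp01 p x) (hy : MemLp01 p y) :
    gunawan p x y = (1 / 2 * wedgeInt p x y) ^ (1 / p) := by
  unfold gunawan wedgeInt
  rw [integral_prod_symm _ (integrable_wedge hp hx hy)]
  simp_rw [intervalIntegral_eq_unitMeas]
  rfl

lemma wedgeInt_rpow_eq {p : ℝ} (hp : 0 < p) {x y : ℝ → ℝ} (hx : MemLp01 p x) (hy : MemLp01 p y) :
    (wedgeInt p x y) ^ (1 / p) = 2 ^ (1 / p) * gunawan p x y := by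
  rw [gunawan_eq hp hx hy, ← Real.mul_rpow (by norm_num)
    (mul_nonneg (by norm_num) (wedgeInt_nonneg _ _ _))]
  congr 1
  ring

/-! ### Upper bound for the Gähler 2-norm -/

/-- Pairing `x₁ ∧ x₂` with `y₁ ⊗ y₂` gives the Gähler determinant, so Hölder's inequality on the
unit square bounds the determinant by the `L^p` norm of the wedge. -/
lemma gahlerSet_le {p q : ℝ} (h : p.HolderConjugate q) {x₁ x₂ : ℝ → ℝ}
    (hx₁ : MemLp01 p x₁) (hx₂ : MemLp01 p x₂) {r : ℝ} (hr : r ∈ GahlerSet q x₁ x₂) :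
    r ≤ (wedgeInt p x₁ x₂) ^ (1 / p) := by
  obtain ⟨y₁, y₂, hy₁, hy₂, hn₁, hn₂, rfl⟩ := hr
  have hint : ∀ a b, MemLp01 p a → MemLp01 q b → Integrable (fun t => a t * b t) unitMeas := by
    intro a b ha hb
    have : ENNReal.HolderConjugate (ENNReal.ofReal p) (ENNReal.ofReal q) :=
      ENNReal.holderConjugate_iff.2 h.inv_add_inv_ennreal
    exact ((memLp01_iff h.pos a).1 ha).2.integrable_mul ((memLp01_iff h.symm.pos b).1 hb).2
  have hdet : (∫ u, x₁ u * y₁ u ∂unitMeas) * (∫ u, x₂ u * y₂ u ∂unitMeas) -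
      (∫ u, x₂ u * y₁ u ∂unitMeas) * (∫ u, x₁ u * y₂ u ∂unitMeas) =
      ∫ z, wedge x₁ x₂ z * (y₁ z.1 * y₂ z.2) ∂(unitMeas.prod unitMeas) := by
    rw [← integral_prod_mul (fun u => x₁ u * y₁ u) (fun u => x₂ u * y₂ u),
      ← integral_prod_mul (fun u => x₂ u * y₁ u) (fun u => x₁ u * y₂ u),
      ← integral_sub ((hint _ _ hx₁ hy₁).mul_prod (hint _ _ hx₂ hy₂))
        ((hint _ _ hx₂ hy₁).mul_prod (hint _ _ hx₁ hy₂))]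
    refine integral_congr_ae (ae_of_all _ fun z => ?_)
    simp only [wedge]
    ring
  simp only [pnorm, intervalIntegral_eq_unitMeas] at hn₁ hn₂ ⊢
  rw [hdet]
  have hH := integral_mul_norm_le_Lp_mul_Lq h (memLp_wedge h.pos hx₁ hx₂)
    (memLp_tensor h.symm.pos hy₁ hy₂)
  simp only [Real.norm_eq_abs] at hH
  rw [integral_tensor, Real.mul_rpow (integral_nonneg fun _ => by positivity)
    (integral_nonneg fun _ => by positivity)] at hH
  calc _ ≤ ∫ z, |wedge x₁ x₂ z * (y₁ z.1 * y₂ z.2)| ∂(unitMeas.prod unitMeas) :=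
        abs_integral_le_integral_abs
    _ = ∫ z, |wedge x₁ x₂ z| * |y₁ z.1 * y₂ z.2| ∂(unitMeas.prod unitMeas) := by
        simp_rw [abs_mul]
    _ ≤ _ := hH
    _ ≤ (wedgeInt p x₁ x₂) ^ (1 / p) * 1 := by
        refine mul_le_mul_of_nonneg_left ?_ (Real.rpow_nonneg (wedgeInt_nonneg _ _ _) _)
        exact mul_le_one₀ hn₁
          (Real.rpow_nonneg (integral_nonneg fun _ => by positivity) _) hn₂
    _ = _ := mul_one _

lemma gahlerSet_bddAbove {p q : ℝ} (h : p.HolderConjugate q) {x₁ x₂ : ℝ → ℝ}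
    (hx₁ : MemLp01 p x₁) (hx₂ : MemLp01 p x₂) : BddAbove (GahlerSet q x₁ x₂) :=
  ⟨_, fun _ hr => gahlerSet_le h hx₁ hx₂ hr⟩

lemma gahler_nonneg (q : ℝ) (x₁ x₂ : ℝ → ℝ) : 0 ≤ gahler q x₁ x₂ := by
  refine Real.sSup_nonneg ?_
  rintro _ ⟨_, _, _, _, _, _, rfl⟩
  exact abs_nonneg _

lemma gahler_le {p q : ℝ} (h : p.HolderConjugate q) {x₁ x₂ : ℝ → ℝ}
    (hx₁ : MemLp01 p x₁) (hx₂ : MemLp01 p x₂) :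
    gahler q x₁ x₂ ≤ (wedgeInt p x₁ x₂) ^ (1 / p) :=
  Real.sSup_le (fun _ hr => gahlerSet_le h hx₁ hx₂ hr)
    (Real.rpow_nonneg (wedgeInt_nonneg _ _ _) _)

lemma wedgeInt_le {p : ℝ} (hp : 1 < p) {x y : ℝ → ℝ} (hx : MemLp01 p x) (hy : MemLp01 p y) :
    wedgeInt p x y ≤ 2 ^ p * ((∫ t, |x t| ^ p ∂unitMeas) * ∫ t, |y t| ^ p ∂unitMeas) := by
  have hp0 : 0 < p := by linarith
  have hten : ∀ a b, MemLp01 p a → MemLp01 p b →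
      Integrable (fun z : ℝ × ℝ => |a z.1 * b z.2| ^ p) (unitMeas.prod unitMeas) := by
    intro a b ha hb
    have h := memLp_tensor hp0 ha hb
    have h' := (integrable_norm_rpow_iff h.1 (by simpa using hp0) ENNReal.ofReal_ne_top).2 h
    rwa [ENNReal.toReal_ofReal hp0.le] at h'
  calc wedgeInt p x y
      ≤ ∫ z : ℝ × ℝ, 2 ^ (p - 1) * (|x z.1 * y z.2| ^ p + |y z.1 * x z.2| ^ p)
          ∂(unitMeas.prod unitMeas) := by
        refine integral_mono (integrable_wedge hp0 hx hy)
          (((hten _ _ hx hy).add (hten _ _ hy hx)).const_mul _) fun z => ?_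
        have h1 : |wedge x y z| ≤ |x z.1 * y z.2| + |y z.1 * x z.2| := by
          rw [wedge, mul_comm (x z.2)]
          exact abs_sub _ _
        refine (Real.rpow_le_rpow (abs_nonneg _) h1 hp0.le).trans ?_
        exact_mod_cast NNReal.rpow_add_le_mul_rpow_add_rpow
          ⟨|x z.1 * y z.2|, abs_nonneg _⟩ ⟨|y z.1 * x z.2|, abs_nonneg _⟩ hp.le
    _ = _ := by
        rw [integral_const_mul, integral_add (hten _ _ hx hy) (hten _ _ hy hx),
          integral_tensor, integral_tensor, Real.rpow_sub_one (by norm_num)]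
        ring

/-! ### The duality map and Birkhoff orthogonality -/

/-- The duality map `c ↦ sign(c) |c|^(p-1)` of `L^p`, written so that its continuity in `c` is
evident. -/
noncomputable def dualMap (p c : ℝ) : ℝ := (max c 0) ^ (p - 1) - (max (-c) 0) ^ (p - 1)

lemma continuous_dualMap {p : ℝ} (hp : 1 < p) : Continuous (dualMap p) := by
  unfold dualMap
  have h : 0 ≤ p - 1 := by linarith
  exact ((continuous_id.max continuous_const).rpow_const fun _ => Or.inr h).sub
    ((continuous_neg.max continuous_const).rpow_const fun _ => Or.inr h)

lemma abs_dualMap {p : ℝ} (hp : 1 < p) (c : ℝ) : |dualMap p c| = |c| ^ (p - 1) := by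
  unfold dualMap
  have h : p - 1 ≠ 0 := by linarith
  rcases le_total 0 c with hc | hc
  · rw [max_eq_left hc, max_eq_right (by linarith), Real.zero_rpow h, sub_zero, abs_of_nonneg hc,
      abs_of_nonneg (by positivity)]
  · rw [max_eq_right hc, max_eq_left (by linarith), Real.zero_rpow h, zero_sub, abs_of_nonpos hc,
      abs_neg, abs_of_nonneg (Real.rpow_nonneg (by linarith) _)]

lemma dualMap_neg (p c : ℝ) : dualMap p (-c) = - dualMap p c := by
  unfold dualMap
  rw [neg_neg]; ring

lemma mul_dualMap {p : ℝ} (hp : 1 < p) (c : ℝ) : c * dualMap p c = |c| ^ p := by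
  have h : p - 1 ≠ 0 := by linarith
  have hp0 : p ≠ 0 := by linarith
  have key : ∀ c : ℝ, 0 ≤ c → c * dualMap p c = |c| ^ p := by
    intro c hc
    rw [dualMap, max_eq_left hc, max_eq_right (by linarith), Real.zero_rpow h, sub_zero,
      abs_of_nonneg hc]
    rcases hc.eq_or_lt with rfl | hc
    · rw [Real.zero_rpow hp0, zero_mul]
    · rw [Real.rpow_sub_one hc.ne']
      field_simp
  rcases le_total 0 c with hc | hc
  · exact key c hc
  · have := key (-c) (by linarith)
    rw [dualMap_neg, abs_neg] at this
    linarith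

/-- The normalised dual function: a function in the unit ball of `L^q` which is a multiple of the
duality map of `x` and norms `x`. -/
lemma exists_norming {p q : ℝ} (h : p.HolderConjugate q) {x : ℝ → ℝ} (hx : MemLp01 p x)
    (hN : 0 < ∫ t, |x t| ^ p ∂unitMeas) :
    ∃ c : ℝ, MemLp01 q (fun t => c * dualMap p (x t)) ∧
      pnorm q (fun t => c * dualMap p (x t)) ≤ 1 ∧
      c * (∫ t, |x t| ^ p ∂unitMeas) = (∫ t, |x t| ^ p ∂unitMeas) ^ (1 / p) := by
  set N := ∫ t, |x t| ^ p ∂unitMeas with hNdef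
  have hq := h.symm.pos
  have hpow : ∀ t, |N ^ (-(1 / q)) * dualMap p (x t)| ^ q = N⁻¹ * |x t| ^ p := by
    intro t
    rw [abs_mul, abs_dualMap h.lt, Real.mul_rpow (abs_nonneg _) (by positivity),
      abs_of_nonneg (by positivity), ← Real.rpow_mul hN.le, ← Real.rpow_mul (abs_nonneg _),
      h.sub_one_mul_conj, neg_mul, one_div_mul_cancel hq.ne', Real.rpow_neg_one]
  refine ⟨N ^ (-(1 / q)), ⟨?_, ?_⟩, ?_, ?_⟩
  · exact measurable_const.mul ((continuous_dualMap h.lt).measurable.comp hx.1)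
  · simp_rw [hpow]
    exact hx.2.const_mul _
  · unfold pnorm
    rw [intervalIntegral_eq_unitMeas]
    simp_rw [hpow]
    rw [integral_const_mul, ← hNdef, inv_mul_cancel₀ hN.ne', Real.one_rpow]
  · nth_rewrite 2 [← Real.rpow_one N]
    rw [← Real.rpow_add hN]
    congr 1
    have := h.one_div_add_one_div
    simp only [div_one] at this
    linarith

/-- A combination `z = s x₂ - t x₁` with `s > 0` that is Birkhoff orthogonal to `x₁`: the duality
map of `z` annihilates `x₁`. It is found by the intermediate value theorem along the half circle
`(s, t) = (sin τ, cos τ)`, at whose endpoints `z = ∓ x₁`. -/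
lemma exists_birkhoff {p : ℝ} (hp : 1 < p) {x₁ x₂ : ℝ → ℝ}
    (hx₁ : MemLp01 p x₁) (hx₂ : MemLp01 p x₂) (hN : 0 < ∫ t, |x₁ t| ^ p ∂unitMeas) :
    ∃ s t : ℝ, 0 < s ∧ ∫ u, x₁ u * dualMap p (s * x₂ u - t * x₁ u) ∂unitMeas = 0 := by
  have hp0 : 0 < p := by linarith
  have hcont : Continuous fun τ : ℝ =>
      ∫ u, x₁ u * dualMap p (Real.sin τ * x₂ u - Real.cos τ * x₁ u) ∂unitMeas := by
    refine continuous_of_dominated (bound := fun u => (|x₁ u| + |x₂ u|) ^ p) ?_ ?_ ?_ ?_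
    · intro τ
      exact (hx₁.1.mul ((continuous_dualMap hp).measurable.comp
        ((hx₂.1.const_mul _).sub (hx₁.1.const_mul _)))).aestronglyMeasurable
    · refine fun τ => ae_of_all _ fun u => ?_
      rw [Real.norm_eq_abs, abs_mul, abs_dualMap hp]
      have h1 : |Real.sin τ * x₂ u - Real.cos τ * x₁ u| ≤ |x₁ u| + |x₂ u| := by
        refine (abs_sub _ _).trans ?_
        rw [abs_mul, abs_mul, add_comm]
        gcongr
        · exact mul_le_of_le_one_left (abs_nonneg _) (Real.abs_cos_le_one τ)
        · exact mul_le_of_le_one_left (abs_nonneg _) (Real.abs_sin_le_one τ)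
      have h2 : |x₁ u| ≤ |x₁ u| + |x₂ u| := le_add_of_nonneg_right (abs_nonneg _)
      have hS : 0 ≤ |x₁ u| + |x₂ u| := by positivity
      calc _ ≤ (|x₁ u| + |x₂ u|) * (|x₁ u| + |x₂ u|) ^ (p - 1) :=
            mul_le_mul h2 (Real.rpow_le_rpow (abs_nonneg _) h1 (by linarith))
              (by positivity) hS
        _ = _ := by
            rcases hS.eq_or_lt with h0 | h0
            · rw [← h0, Real.zero_rpow hp0.ne', zero_mul]
            · rw [Real.rpow_sub_one h0.ne']
              field_simp
    · have h := (((memLp01_iff hp0 x₁).1 hx₁).2.norm).add (((memLp01_iff hp0 x₂).1 hx₂).2.norm)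
      have h' := (integrable_norm_rpow_iff h.1 (by simpa using hp0) ENNReal.ofReal_ne_top).2 h
      rw [ENNReal.toReal_ofReal hp0.le] at h'
      refine h'.congr (ae_of_all _ fun u => ?_)
      simp only [Pi.add_apply, Real.norm_eq_abs]
      rw [abs_of_nonneg (by positivity)]
    · refine ae_of_all _ fun u => continuous_const.mul ((continuous_dualMap hp).comp ?_)
      fun_prop
  set φ : ℝ → ℝ := fun τ : ℝ =>
      ∫ u, x₁ u * dualMap p (Real.sin τ * x₂ u - Real.cos τ * x₁ u) ∂unitMeas with hφ
  have h0 : φ 0 < 0 := by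
    simp only [hφ, Real.sin_zero, Real.cos_zero, zero_mul, one_mul, zero_sub, dualMap_neg,
      mul_neg, mul_dualMap hp, integral_neg]
    linarith
  have hπ : 0 < φ Real.pi := by
    simpa only [hφ, Real.sin_pi, Real.cos_pi, zero_mul, neg_mul, one_mul, zero_sub, neg_neg,
      mul_dualMap hp] using hN
  obtain ⟨τ, ⟨hτ0, hτπ⟩, hτ⟩ :=
    intermediate_value_Icc Real.pi_pos.le hcont.continuousOn ⟨h0.le, hπ.le⟩
  refine ⟨Real.sin τ, Real.cos τ, Real.sin_pos_of_pos_of_lt_pi ?_ ?_, hτ⟩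
  · refine lt_of_le_of_ne hτ0 ?_
    rintro rfl
    exact h0.ne hτ
  · refine lt_of_le_of_ne hτπ ?_
    rintro rfl
    exact (ne_of_gt hπ) hτ

/-! ### Lower bound for the Gähler 2-norm -/

/-- With `z = s x₂ - t x₁` Birkhoff orthogonal to `x₁`, testing against the normalised dual
functions of `x₁` and `z` makes the matrix triangular, so `‖x₁, x₂‖^G ≥ ‖x₁‖ ‖z‖ / s`; while
`x₁ ∧ x₂ = (x₁ ∧ z) / s` has norm at most `2 ‖x₁‖ ‖z‖ / s`. -/
lemma le_gahler {p q : ℝ} (h : p.HolderConjugate q) {x₁ x₂ : ℝ → ℝ}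
    (hx₁ : MemLp01 p x₁) (hx₂ : MemLp01 p x₂) :
    (wedgeInt p x₁ x₂) ^ (1 / p) ≤ 2 * gahler q x₁ x₂ := by
  have hp := h.lt
  have hp0 := h.pos
  have hG := gahler_nonneg q x₁ x₂
  have hzero : wedgeInt p x₁ x₂ ≤ 0 →
      (wedgeInt p x₁ x₂) ^ (1 / p) ≤ 2 * gahler q x₁ x₂ := by
    intro h0
    rw [le_antisymm h0 (wedgeInt_nonneg _ _ _), Real.zero_rpow h.one_div_ne_zero]
    linarith
  have hN₁ : 0 ≤ ∫ t, |x₁ t| ^ p ∂unitMeas := integral_nonneg fun _ => by positivity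
  rcases hN₁.eq_or_lt with hN₁ | hN₁
  · refine hzero ((wedgeInt_le hp hx₁ hx₂).trans ?_)
    rw [← hN₁]; simp
  obtain ⟨s, t, hs, hst⟩ := exists_birkhoff hp hx₁ hx₂ hN₁
  set z : ℝ → ℝ := fun u => s * x₂ u - t * x₁ u with hz
  have hzmem : MemLp01 p z := by
    rw [memLp01_iff hp0] at hx₁ hx₂ ⊢
    exact ⟨(hx₂.1.const_mul _).sub (hx₁.1.const_mul _),
      (hx₂.2.const_mul s).sub (hx₁.2.const_mul t)⟩
  have hW : wedgeInt p x₁ z = s ^ p * wedgeInt p x₁ x₂ := by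
    unfold wedgeInt
    rw [← integral_const_mul]
    refine integral_congr_ae (ae_of_all _ fun w => ?_)
    have : wedge x₁ z w = s * wedge x₁ x₂ w := by
      simp only [wedge, hz]; ring
    simp only [this, abs_mul, abs_of_pos hs]
    rw [Real.mul_rpow hs.le (abs_nonneg _)]
  have hWle := wedgeInt_le hp hx₁ hzmem
  rw [hW] at hWle
  have hsp : 0 < s ^ p := Real.rpow_pos_of_pos hs p
  have hN₂ : 0 ≤ ∫ t, |z t| ^ p ∂unitMeas := integral_nonneg fun _ => by positivity
  rcases hN₂.eq_or_lt with hN₂ | hN₂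
  · rw [← hN₂, mul_zero, mul_zero] at hWle
    exact hzero (nonpos_of_mul_nonpos_right hWle hsp)
  obtain ⟨c₁, hm₁, hn₁, hc₁⟩ := exists_norming h hx₁ hN₁
  obtain ⟨c₂, hm₂, hn₂, hc₂⟩ := exists_norming h hzmem hN₂
  set N₁ := ∫ t, |x₁ t| ^ p ∂unitMeas
  set N₂ := ∫ t, |z t| ^ p ∂unitMeas with hN₂def
  have e₁ : ∫ u, x₁ u * (c₁ * dualMap p (x₁ u)) ∂unitMeas = N₁ ^ (1 / p) := by
    rw [← hc₁, ← integral_const_mul]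
    refine integral_congr_ae (ae_of_all _ fun u => ?_)
    simp only [← mul_dualMap hp (x₁ u)]; ring
  have e₂ : ∫ u, x₁ u * (c₂ * dualMap p (z u)) ∂unitMeas = 0 := by
    rw [← mul_zero c₂, ← hst, ← integral_const_mul]
    refine integral_congr_ae (ae_of_all _ fun u => ?_)
    simp only [hz]; ring
  have hint : ∀ a b, MemLp01 p a → MemLp01 q b → Integrable (fun t => a t * b t) unitMeas := by
    intro a b ha hb
    have : ENNReal.HolderConjugate (ENNReal.ofReal p) (ENNReal.ofReal q) :=
      ENNReal.holderConjugate_iff.2 h.inv_add_inv_ennreal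
    exact ((memLp01_iff h.pos a).1 ha).2.integrable_mul ((memLp01_iff h.symm.pos b).1 hb).2
  have e₃ : s * ∫ u, x₂ u * (c₂ * dualMap p (z u)) ∂unitMeas = N₂ ^ (1 / p) := by
    have : s * (∫ u, x₂ u * (c₂ * dualMap p (z u)) ∂unitMeas) -
        t * (∫ u, x₁ u * (c₂ * dualMap p (z u)) ∂unitMeas) = N₂ ^ (1 / p) := by
      rw [← hc₂, hN₂def, ← integral_const_mul, ← integral_const_mul, ← integral_const_mul,
        ← integral_sub ((hint _ _ hx₂ hm₂).const_mul s) ((hint _ _ hx₁ hm₂).const_mul t)]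
      refine integral_congr_ae (ae_of_all _ fun u => ?_)
      simp only [← mul_dualMap hp (z u)]
      simp only [hz]; ring
    rwa [e₂, mul_zero, sub_zero] at this
  have hge : N₁ ^ (1 / p) * (N₂ ^ (1 / p) / s) ≤ gahler q x₁ x₂ := by
    refine le_csSup (gahlerSet_bddAbove h hx₁ hx₂) ⟨_, _, hm₁, hm₂, hn₁, hn₂, ?_⟩
    simp only [intervalIntegral_eq_unitMeas]
    rw [e₁, e₂, ← e₃, mul_zero, sub_zero, mul_div_cancel_left₀ _ hs.ne', abs_of_nonneg]
    have : 0 ≤ N₂ ^ (1 / p) := by positivity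
    rw [← e₃] at this
    exact mul_nonneg (by positivity) (nonneg_of_mul_nonneg_right this hs)
  have hroot := Real.rpow_le_rpow (mul_nonneg hsp.le (wedgeInt_nonneg _ _ _)) hWle
    h.one_div_nonneg
  rw [Real.mul_rpow hsp.le (wedgeInt_nonneg _ _ _), Real.mul_rpow (by positivity) (by positivity),
    Real.mul_rpow hN₁.le hN₂.le, ← Real.rpow_mul hs.le, ← Real.rpow_mul (by norm_num),
    mul_one_div_cancel hp0.ne', Real.rpow_one, Real.rpow_one] at hroot
  calc _ ≤ 2 * (N₁ ^ (1 / p) * (N₂ ^ (1 / p) / s)) := by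
        rw [← mul_div_assoc, ← mul_div_assoc, le_div_iff₀ hs]
        linarith
    _ ≤ _ := by linarith

/-! ### Comparison of the 2-norms and of their duals -/

lemma gahler_le_gunawan {p q : ℝ} (h : p.HolderConjugate q) {x y : ℝ → ℝ}
    (hx : MemLp01 p x) (hy : MemLp01 p y) :
    gahler q x y ≤ 2 ^ (1 / p) * gunawan p x y :=
  (gahler_le h hx hy).trans_eq (wedgeInt_rpow_eq h.pos hx hy)

lemma gunawan_le_gahler {p q : ℝ} (h : p.HolderConjugate q) {x y : ℝ → ℝ}
    (hx : MemLp01 p x) (hy : MemLp01 p y) :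
    2 ^ (1 / p - 1) * gunawan p x y ≤ gahler q x y := by
  have h1 := le_gahler h hx hy
  rw [wedgeInt_rpow_eq h.pos hx hy] at h1
  rw [Real.rpow_sub_one (by norm_num)]
  linarith

lemma gunawan_nonneg {p : ℝ} (hp : 0 < p) {x y : ℝ → ℝ} (hx : MemLp01 p x) (hy : MemLp01 p y) :
    0 ≤ gunawan p x y := by
  rw [gunawan_eq hp hx hy]
  exact Real.rpow_nonneg (mul_nonneg (by norm_num) (wedgeInt_nonneg _ _ _)) _

/-- If every element of `A` is at most `c` times some element of `B`, and every element of
`B` at most `d` times some element of `A`, the suprema compare; in the unbounded case both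
suprema have the junk value `0`. -/
lemma sSup_le_mul_sSup {A B : Set ℝ} {c d : ℝ} (hc : 0 ≤ c)
    (hB : ∀ b ∈ B, 0 ≤ b) (hAB : ∀ a ∈ A, ∃ b ∈ B, a ≤ c * b)
    (hBA : ∀ b ∈ B, ∃ a ∈ A, b ≤ d * a) (hd : 0 ≤ d) :
    sSup A ≤ c * sSup B := by
  by_cases hbB : BddAbove B
  · refine Real.sSup_le (fun a ha => ?_) (mul_nonneg hc (Real.sSup_nonneg hB))
    obtain ⟨b, hb, hab⟩ := hAB a ha
    exact hab.trans (mul_le_mul_of_nonneg_left (le_csSup hbB hb) hc)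
  · have hbA : ¬ BddAbove A := by
      rintro ⟨M, hM⟩
      refine hbB ⟨d * M, fun b hb => ?_⟩
      obtain ⟨a, ha, hba⟩ := hBA b hb
      exact hba.trans (mul_le_mul_of_nonneg_left (hM ha) hd)
    rw [Real.sSup_of_not_bddAbove hbA, Real.sSup_of_not_bddAbove hbB, mul_zero]

/-- for `1 < p < ∞`, `1/p + 1/q = 1`, and `θ` measurable, antisymmetric
a.e., with `‖θ‖_{Y^q} < ∞`, one has `2^(1/p − 1) ‖θ‖^G ≤ ‖θ‖^H ≤ 2^(1/p) ‖θ‖^G`. -/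
theorem stmt15 (p q : ℝ) (hp : 1 < p) (hpq : 1 / p + 1 / q = 1)
    (θ : ℝ → ℝ → ℝ) (hθmeas : Measurable (Function.uncurry θ))
    (hθfin : BddAbove (Yset p q θ))
    (hθanti : ∀ᵐ z ∂((volume.restrict (Set.Ioc (0:ℝ) 1)).prod
      (volume.restrict (Set.Ioc (0:ℝ) 1))), θ z.1 z.2 = - θ z.2 z.1) :
    (2:ℝ) ^ (1 / p - 1) * sSup (GdualSet p q θ) ≤ sSup (HdualSet p θ) ∧
    sSup (HdualSet p θ) ≤ (2:ℝ) ^ (1 / p) * sSup (GdualSet p q θ) := by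
  have h : p.HolderConjugate q := Real.holderConjugate_iff.2 ⟨hp, by simpa using hpq⟩
  have h2 : (2:ℝ) ^ (1 / p - 1) * 2 ^ (1 - 1 / p) = 1 := by
    rw [← Real.rpow_add (by norm_num)]; simp
  have hGH : ∀ a ∈ GdualSet p q θ, ∃ b ∈ HdualSet p θ, a ≤ 2 ^ (1 - 1 / p) * b := by
    rintro _ ⟨x, y, hx, hy, hne, rfl⟩
    have hpos : 0 < gahler q x y := lt_of_le_of_ne (gahler_nonneg q x y) hne.symm
    have hle := gahler_le_gunawan h hx hy
    have hHpos : 0 < gunawan p x y :=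
      pos_of_mul_pos_right (hpos.trans_le hle) (by positivity)
    refine ⟨_, ⟨x, y, hx, hy, hHpos.ne', rfl⟩, ?_⟩
    rw [← mul_div_assoc, div_le_div_iff₀ hpos hHpos]
    have hle' : gunawan p x y ≤ 2 ^ (1 - 1 / p) * gahler q x y := by
      calc gunawan p x y = 2 ^ (1 - 1 / p) * (2 ^ (1 / p - 1) * gunawan p x y) := by
            rw [← mul_assoc, mul_comm ((2:ℝ) ^ (1 - 1 / p)), h2, one_mul]
        _ ≤ _ := mul_le_mul_of_nonneg_left (gunawan_le_gahler h hx hy) (by positivity)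
    refine (mul_le_mul_of_nonneg_left hle' (abs_nonneg _)).trans_eq ?_
    ring
  have hHG : ∀ b ∈ HdualSet p θ, ∃ a ∈ GdualSet p q θ, b ≤ 2 ^ (1 / p) * a := by
    rintro _ ⟨x, y, hx, hy, hne, rfl⟩
    have hpos : 0 < gunawan p x y := lt_of_le_of_ne (gunawan_nonneg h.pos hx hy) hne.symm
    have hGpos : 0 < gahler q x y :=
      lt_of_lt_of_le (by positivity) (gunawan_le_gahler h hx hy)
    refine ⟨_, ⟨x, y, hx, hy, hGpos.ne', rfl⟩, ?_⟩
    rw [← mul_div_assoc, div_le_div_iff₀ hpos hGpos]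
    refine (mul_le_mul_of_nonneg_left (gahler_le_gunawan h hx hy) (abs_nonneg _)).trans_eq ?_
    ring
  have hG0 : ∀ a ∈ GdualSet p q θ, 0 ≤ a := by
    rintro _ ⟨x, y, _, _, _, rfl⟩
    exact div_nonneg (abs_nonneg _) (gahler_nonneg q x y)
  have hH0 : ∀ b ∈ HdualSet p θ, 0 ≤ b := by
    rintro _ ⟨x, y, hx, hy, _, rfl⟩
    exact div_nonneg (abs_nonneg _) (gunawan_nonneg h.pos hx hy)
  refine ⟨?_, sSup_le_mul_sSup (by positivity) hG0 hHG hGH (by positivity)⟩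
  have h3 := sSup_le_mul_sSup (by positivity) hH0 hGH hHG (by positivity)
  calc _ ≤ (2:ℝ) ^ (1 / p - 1) * (2 ^ (1 - 1 / p) * sSup (HdualSet p θ)) :=
        mul_le_mul_of_nonneg_left h3 (by positivity)
    _ = _ := by rw [← mul_assoc, h2, one_mul]
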